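/- arXiv:2604.12302 — 5 statements merged into one kernel-verified Lean document; each statement's English description precedes it below -/
import Mathlib

section
/- Let X be a metric space, let μ_1, μ_2, ν_1, ν_2 be Borel probability measures on X, and let 0 < a < 1. Then the Prokhorov distance satisfies d_P(a μ_1 + (1−a) μ_2, a ν_1 + (1−a) ν_2) ≤ d_P(μ_1, ν_1) + 1 − a. -/
/-!
Call `ε` admissible for `(μ, ν)` if `ν A ≤ μ (U_ε A) + ε` for every Borel set `A`.
Multiplying this inequality by a constant `c ≤ 1` only shrinks the error term, and adding a
measure `ν'` to `ν` costs at most its total mass, which `ε` can absorb because thickenings grow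
with `ε`. A convex combination is such a rescaling followed by the addition of a measure of
mass `1 - a`.
-/

open MeasureTheory

/-- The Prokhorov distance between two Borel probability measures `μ`, `ν` on a metric
space `X`: `d_P(μ, ν) := inf {ε > 0 | μ(U_ε(A)) ≥ ν(A) − ε for every Borel set A}`,
where `U_ε(A)` is the open `ε`-neighborhood (thickening) of `A`. -/
noncomputable def prokhorovDist {X : Type*} [MetricSpace X] [MeasurableSpace X]
    (μ ν : Measure X) : ℝ :=
  sInf {ε : ℝ | 0 < ε ∧ ∀ A : Set X, MeasurableSet A →
    ν A ≤ μ (Metric.thickening ε A) + ENNReal.ofReal ε}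

section

open scoped ENNReal

variable {X : Type*} [MetricSpace X] [MeasurableSpace X] {μ ν : Measure X} {ε : ℝ}

/-- The admissible `ε` in the definition of the Prokhorov distance: `prokhorovDist μ ν` is their
infimum. -/
def IsProkhorovBound (μ ν : Measure X) (ε : ℝ) : Prop :=
  0 < ε ∧ ∀ A : Set X, MeasurableSet A →
    ν A ≤ μ (Metric.thickening ε A) + ENNReal.ofReal ε

theorem isProkhorovBound_measureReal_univ_add_one (μ ν : Measure X) [IsFiniteMeasure ν] :
    IsProkhorovBound μ ν (ν.real Set.univ + 1) := by
  refine ⟨by positivity, fun A _ ↦ ?_⟩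
  calc ν A ≤ ν Set.univ := measure_mono A.subset_univ
    _ = ENNReal.ofReal (ν.real Set.univ) := by rw [ofReal_measureReal]
    _ ≤ ENNReal.ofReal (ν.real Set.univ + 1) := ENNReal.ofReal_le_ofReal (by linarith)
    _ ≤ μ (Metric.thickening (ν.real Set.univ + 1) A)
          + ENNReal.ofReal (ν.real Set.univ + 1) := le_add_self

namespace IsProkhorovBound

theorem smul (h : IsProkhorovBound μ ν ε) {c : ℝ≥0∞} (hc : c ≤ 1) :
    IsProkhorovBound (c • μ) (c • ν) ε := by
  refine ⟨h.1, fun A hA ↦ ?_⟩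
  simp only [Measure.smul_apply, smul_eq_mul]
  calc c * ν A ≤ c * (μ (Metric.thickening ε A) + ENNReal.ofReal ε) := by
        gcongr; exact h.2 A hA
    _ = c * μ (Metric.thickening ε A) + c * ENNReal.ofReal ε := mul_add ..
    _ ≤ c * μ (Metric.thickening ε A) + ENNReal.ofReal ε := by
        gcongr; exact mul_le_of_le_one_left zero_le hc

theorem add (h : IsProkhorovBound μ ν ε) (μ' ν' : Measure X) [IsFiniteMeasure ν'] :
    IsProkhorovBound (μ + μ') (ν + ν') (ε + ν'.real Set.univ) := by
  refine ⟨add_pos_of_pos_of_nonneg h.1 measureReal_nonneg, fun A hA ↦ ?_⟩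
  have hε : ε ≤ ε + ν'.real Set.univ := le_add_of_nonneg_right measureReal_nonneg
  calc (ν + ν') A = ν A + ν' A := Measure.add_apply ..
    _ ≤ (μ (Metric.thickening ε A) + ENNReal.ofReal ε) + ν' Set.univ :=
        add_le_add (h.2 A hA) (measure_mono A.subset_univ)
    _ = μ (Metric.thickening ε A) + ENNReal.ofReal (ε + ν'.real Set.univ) := by
        rw [ENNReal.ofReal_add h.1.le measureReal_nonneg, ofReal_measureReal, add_assoc]
    _ ≤ (μ + μ') (Metric.thickening (ε + ν'.real Set.univ) A)
          + ENNReal.ofReal (ε + ν'.real Set.univ) := by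
        gcongr
        exact Measure.le_add_right le_rfl

theorem prokhorovDist_le (h : IsProkhorovBound μ ν ε) : prokhorovDist μ ν ≤ ε :=
  csInf_le ⟨0, fun _ hδ ↦ hδ.1.le⟩ h

end IsProkhorovBound

theorem le_prokhorovDist [IsFiniteMeasure ν] {r : ℝ}
    (h : ∀ ε, IsProkhorovBound μ ν ε → r ≤ ε) : r ≤ prokhorovDist μ ν :=
  le_csInf ⟨_, isProkhorovBound_measureReal_univ_add_one μ ν⟩ h

theorem prokhorovDist_smul_le (μ ν : Measure X) [IsFiniteMeasure ν] {c : ℝ≥0∞} (hc : c ≤ 1) :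
    prokhorovDist (c • μ) (c • ν) ≤ prokhorovDist μ ν :=
  le_prokhorovDist fun _ h ↦ (h.smul hc).prokhorovDist_le

theorem prokhorovDist_add_le (μ μ' ν ν' : Measure X) [IsFiniteMeasure ν] [IsFiniteMeasure ν'] :
    prokhorovDist (μ + μ') (ν + ν') ≤ prokhorovDist μ ν + ν'.real Set.univ := by
  rw [← sub_le_iff_le_add]
  exact le_prokhorovDist fun _ h ↦ sub_le_iff_le_add.2 (h.add μ' ν').prokhorovDist_le

theorem prokhorovDist_convexCombo_two_le_general (μ₁ μ₂ ν₁ ν₂ : Measure X)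
    [IsFiniteMeasure ν₁] [IsFiniteMeasure ν₂] {a b : ℝ≥0∞} (ha : a ≤ 1) (hb : b ≠ ∞) :
    prokhorovDist (a • μ₁ + b • μ₂) (a • ν₁ + b • ν₂) ≤
      prokhorovDist μ₁ ν₁ + b.toReal * ν₂.real Set.univ := by
  have : IsFiniteMeasure (a • ν₁) := ν₁.smul_finite (ha.trans_lt ENNReal.one_lt_top).ne
  have : IsFiniteMeasure (b • ν₂) := ν₂.smul_finite hb
  calc prokhorovDist (a • μ₁ + b • μ₂) (a • ν₁ + b • ν₂)
      ≤ prokhorovDist (a • μ₁) (a • ν₁) + (b • ν₂).real Set.univ := prokhorovDist_add_le ..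
    _ ≤ prokhorovDist μ₁ ν₁ + b.toReal * ν₂.real Set.univ := by
        rw [measureReal_ennreal_smul_apply]
        gcongr
        exact prokhorovDist_smul_le μ₁ ν₁ ha

end

/-- `d_P(a μ₁ + (1−a) μ₂, a ν₁ + (1−a) ν₂) ≤ d_P(μ₁, ν₁) + 1 − a` for `0 < a < 1`. -/
theorem prokhorovDist_convexCombo_two_le {X : Type*} [MetricSpace X] [MeasurableSpace X]
    [BorelSpace X]
    (μ₁ μ₂ ν₁ ν₂ : Measure X)
    (hμ₁ : IsProbabilityMeasure μ₁) (hμ₂ : IsProbabilityMeasure μ₂)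
    (hν₁ : IsProbabilityMeasure ν₁) (hν₂ : IsProbabilityMeasure ν₂)
    (a : ℝ) (ha0 : 0 < a) (ha1 : a < 1) :
    prokhorovDist (ENNReal.ofReal a • μ₁ + ENNReal.ofReal (1 - a) • μ₂)
        (ENNReal.ofReal a • ν₁ + ENNReal.ofReal (1 - a) • ν₂) ≤
      prokhorovDist μ₁ ν₁ + 1 - a := by
  simpa [ENNReal.toReal_ofReal (sub_nonneg.2 ha1.le), add_sub_assoc] using
    prokhorovDist_convexCombo_two_le_general μ₁ μ₂ ν₁ ν₂
      (ENNReal.ofReal_le_one.2 ha1.le) (ENNReal.ofReal_ne_top (r := 1 - a))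
end

section
/- Let X be a metric space. Let (a_n)_{n∈ℕ} and (b_n)_{n∈ℕ} be sequences of nonnegative real numbers with ∑_{n} a_n = ∑_{n} b_n = 1, and let (μ_n)_{n∈ℕ} and (ν_n)_{n∈ℕ} be Borel probability measures on X. Then for every M ∈ ℕ, the Prokhorov distance satisfies d_P(∑_{n} a_n μ_n, ∑_{n} b_n ν_n) ≤ max_{n < M} d_P(μ_n, ν_n) + ∑_{n} |a_n − b_n| + ∑_{n ≥ M} a_n + ∑_{n ≥ M} b_n. -/
open MeasureTheory

/-!
Compare `∑ aₙ μₙ` and `∑ bₙ νₙ` through the weights `cₙ = aₙ` for `n < M`, `cₙ = 0` otherwise.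
For each `ε` the inequality in the definition of `d_P` survives combinations with weights of total
at most `1`, so `∑ cₙ μₙ` and `∑ cₙ νₙ` are at distance at most `max_{n<M} d_P(μₙ, νₙ)`.
Passing from `∑ cₙ μₙ` up to `∑ aₙ μₙ` costs nothing, as only lower bounds on the first measure
matter; passing from `∑ cₙ νₙ` to `∑ bₙ νₙ` costs at most the mass `∑ (bₙ - cₙ)⁺` that is added.
-/

open scoped ENNReal

section ProkhorovDist

variable {X : Type*} [MetricSpace X] [MeasurableSpace X] {μ ν : Measure X}

theorem prokhorovDist_nonneg (μ ν : Measure X) : 0 ≤ prokhorovDist μ ν :=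
  Real.sInf_nonneg fun _ h => h.1.le

theorem prokhorovDist_le_of_forall_gt {r : ℝ} (hr : 0 ≤ r)
    (h : ∀ ε > r, ∀ A, MeasurableSet A →
      ν A ≤ μ (Metric.thickening ε A) + ENNReal.ofReal ε) :
    prokhorovDist μ ν ≤ r :=
  le_of_forall_gt_imp_ge_of_dense fun ε hε =>
    csInf_le ⟨0, fun _ h => h.1.le⟩ ⟨hr.trans_lt hε, h ε hε⟩

theorem measure_le_of_prokhorovDist_lt [IsFiniteMeasure ν] {ε : ℝ} (h : prokhorovDist μ ν < ε)
    {A : Set X} (hA : MeasurableSet A) :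
    ν A ≤ μ (Metric.thickening ε A) + ENNReal.ofReal ε := by
  have le_mass_add_one (B : Set X) : ν B ≤ ENNReal.ofReal (ν.real Set.univ + 1) :=
    calc ν B ≤ ν Set.univ := measure_mono B.subset_univ
      _ = ENNReal.ofReal (ν.real Set.univ) := (ofReal_measureReal (μ := ν)).symm
      _ ≤ ENNReal.ofReal (ν.real Set.univ + 1) := ENNReal.ofReal_le_ofReal (by linarith)
  have admissible_nonempty : {ε : ℝ | 0 < ε ∧ ∀ A : Set X, MeasurableSet A →
      ν A ≤ μ (Metric.thickening ε A) + ENNReal.ofReal ε}.Nonempty :=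
    ⟨ν.real Set.univ + 1, by positivity, fun B _ => le_add_left (le_mass_add_one B)⟩
  obtain ⟨δ, ⟨-, hδ⟩, hδε⟩ := exists_lt_of_csInf_lt admissible_nonempty h
  calc ν A ≤ μ (Metric.thickening δ A) + ENNReal.ofReal δ := hδ A hA
    _ ≤ μ (Metric.thickening ε A) + ENNReal.ofReal ε := by gcongr

theorem prokhorovDist_le_add_of_le_add {μ' ν' τ : Measure X} [IsFiniteMeasure ν]
    [IsFiniteMeasure τ] (hμ : μ ≤ μ') (hν : ν' ≤ ν + τ) :
    prokhorovDist μ' ν' ≤ prokhorovDist μ ν + τ.real Set.univ := by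
  have hd := prokhorovDist_nonneg μ ν
  refine prokhorovDist_le_of_forall_gt (by positivity) fun ε hε A hA => ?_
  set t := τ.real Set.univ
  have ht : 0 ≤ t := measureReal_nonneg
  calc ν' A ≤ ν A + τ A := hν A
    _ ≤ μ (Metric.thickening (ε - t) A) + ENNReal.ofReal (ε - t) + ENNReal.ofReal t := by
      gcongr
      · exact measure_le_of_prokhorovDist_lt (by linarith) hA
      · exact (measure_mono A.subset_univ).trans_eq (ofReal_measureReal (μ := τ)).symm
    _ = μ (Metric.thickening (ε - t) A) + ENNReal.ofReal ε := by
      rw [add_assoc, ← ENNReal.ofReal_add (by linarith) ht, sub_add_cancel]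
    _ ≤ μ' (Metric.thickening ε A) + ENNReal.ofReal ε := by
      gcongr ?_ + _
      exact (hμ _).trans (measure_mono (Metric.thickening_mono (by linarith) A))

end ProkhorovDist

section WeightedSums

variable {ι X : Type*} [MeasurableSpace X]

theorem sum_smul_univ_le_tsum {ν : ι → Measure X} (hν : ∀ n, ν n Set.univ ≤ 1) (c : ι → ℝ≥0∞) :
    Measure.sum (fun n => c n • ν n) Set.univ ≤ ∑' n, c n := by
  rw [Measure.sum_apply _ MeasurableSet.univ]
  exact ENNReal.tsum_le_tsum fun n => mul_le_of_le_one_right' (hν n)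

theorem measureSum_mono {μ ν : ι → Measure X} (h : μ ≤ ν) : Measure.sum μ ≤ Measure.sum ν :=
  Measure.le_iff.2 fun A hA => by
    rw [Measure.sum_apply _ hA, Measure.sum_apply _ hA]
    exact ENNReal.tsum_le_tsum fun n => h n A

variable [MetricSpace X]

theorem prokhorovDist_sum_smul_le {c : ι → ℝ≥0∞} (hc : ∑' n, c n ≤ 1) {μ ν : ι → Measure X}
    [∀ n, IsFiniteMeasure (ν n)] {r : ℝ} (hr : 0 ≤ r)
    (hd : ∀ n, c n ≠ 0 → prokhorovDist (μ n) (ν n) ≤ r) :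
    prokhorovDist (Measure.sum fun n => c n • μ n) (Measure.sum fun n => c n • ν n) ≤ r := by
  refine prokhorovDist_le_of_forall_gt hr fun ε hε A hA => ?_
  set U := Metric.thickening ε A
  have term_le (n : ι) : c n * ν n A ≤ c n * μ n U + c n * ENNReal.ofReal ε := by
    rcases eq_or_ne (c n) 0 with hn | hn
    · simp [hn]
    · rw [← mul_add]
      gcongr
      exact measure_le_of_prokhorovDist_lt ((hd n hn).trans_lt hε) hA
  calc Measure.sum (fun n => c n • ν n) A
      = ∑' n, c n * ν n A := Measure.sum_apply _ hA
    _ ≤ ∑' n, (c n * μ n U + c n * ENNReal.ofReal ε) := ENNReal.tsum_le_tsum term_le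
    _ = ∑' n, c n * μ n U + (∑' n, c n) * ENNReal.ofReal ε := by
      rw [ENNReal.tsum_add, ENNReal.tsum_mul_right]
    _ ≤ Measure.sum (fun n => c n • μ n) U + ENNReal.ofReal ε :=
      add_le_add (Measure.le_sum_apply _ U) (mul_le_of_le_one_left' hc)

-- Subtraction in `ℝ≥0∞` is truncated: the summands are `(bₙ - aₙ)⁺` on `s` and `bₙ` off `s`.
theorem prokhorovDist_countable_convexCombo_le_general {a b : ι → ℝ≥0∞} (ha : ∑' n, a n ≤ 1)
    (hb : ∑' n, b n ≠ ∞) (μ : ι → Measure X) {ν : ι → Measure X} (hν : ∀ n, ν n Set.univ ≤ 1)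
    (s : Set ι) {r : ℝ} (hr : 0 ≤ r) (hd : ∀ n ∈ s, prokhorovDist (μ n) (ν n) ≤ r) :
    prokhorovDist (Measure.sum fun n => a n • μ n) (Measure.sum fun n => b n • ν n) ≤
      r + (∑' n, (b n - s.indicator a n)).toReal := by
  set c := s.indicator a
  set τ := Measure.sum fun n => (b n - c n) • ν n
  have hca : c ≤ a := Set.indicator_le_self s a
  have hc : ∑' n, c n ≤ 1 := (ENNReal.tsum_le_tsum hca).trans ha
  have hbc : ∑' n, (b n - c n) ≠ ∞ :=
    ne_top_of_le_ne_top hb (ENNReal.tsum_le_tsum fun _ => tsub_le_self)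
  have hτ : τ Set.univ ≤ ∑' n, (b n - c n) := sum_smul_univ_le_tsum hν _
  have (n : ι) : IsFiniteMeasure (ν n) := ⟨(hν n).trans_lt ENNReal.one_lt_top⟩
  have : IsFiniteMeasure (Measure.sum fun n => c n • ν n) :=
    ⟨((sum_smul_univ_le_tsum hν c).trans hc).trans_lt ENNReal.one_lt_top⟩
  have : IsFiniteMeasure τ := ⟨hτ.trans_lt hbc.lt_top⟩
  have hbν : Measure.sum (fun n => b n • ν n) ≤ Measure.sum (fun n => c n • ν n) + τ := by
    simp only [τ, Measure.sum_add_sum, ← add_smul]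
    exact measureSum_mono fun n A => mul_le_mul_left le_add_tsub (ν n A)
  calc prokhorovDist (Measure.sum fun n => a n • μ n) (Measure.sum fun n => b n • ν n)
      ≤ prokhorovDist (Measure.sum fun n => c n • μ n) (Measure.sum fun n => c n • ν n)
          + τ.real Set.univ :=
        prokhorovDist_le_add_of_le_add
          (measureSum_mono fun n A => mul_le_mul_left (hca n) (μ n A)) hbν
    _ ≤ r + (∑' n, (b n - c n)).toReal :=
        add_le_add
          (prokhorovDist_sum_smul_le hc hr fun n hn => hd n (Set.mem_of_indicator_ne_zero hn))
          (ENNReal.toReal_mono hbc hτ)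

end WeightedSums

section RealWeights

theorem summable_of_tsum_ne_zero {ι α : Type*} [AddCommMonoid α] [TopologicalSpace α] {f : ι → α}
    (h : ∑' n, f n ≠ 0) : Summable f :=
  not_imp_comm.1 tsum_eq_zero_of_not_summable h

theorem tsum_tsub_indicator_Iio (a b : ℕ → ℝ≥0∞) (M : ℕ) :
    ∑' n, (b n - (Set.Iio M).indicator a n) =
      ∑ n ∈ Finset.range M, (b n - a n) + ∑' n, b (M + n) := by
  rw [← ENNReal.summable.sum_add_tsum_nat_add' (k := M)]
  congr 1
  · refine Finset.sum_congr rfl fun n hn => ?_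
    rw [Set.indicator_of_mem (Set.mem_Iio.mpr (Finset.mem_range.mp hn))]
  · simp [add_comm M]

theorem toReal_tsum_ofReal_tsub_indicator_Iio_le {a b : ℕ → ℝ} (ha0 : ∀ n, 0 ≤ a n)
    (hb0 : ∀ n, 0 ≤ b n) (hb : Summable b) (hab : Summable fun n => |a n - b n|) (M : ℕ) :
    (∑' n, (ENNReal.ofReal (b n)
      - (Set.Iio M).indicator (fun k => ENNReal.ofReal (a k)) n)).toReal ≤
        (∑' n, |a n - b n|) + ∑' n, b (M + n) := by
  have hD0 : 0 ≤ ∑' n, |a n - b n| := tsum_nonneg fun _ => abs_nonneg _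
  have hT0 : 0 ≤ ∑' n, b (M + n) := tsum_nonneg fun _ => hb0 _
  refine ENNReal.toReal_le_of_le_ofReal (add_nonneg hD0 hT0) ?_
  have tail_summable : Summable fun n => b (M + n) := hb.comp_injective (add_right_injective M)
  rw [tsum_tsub_indicator_Iio, ENNReal.ofReal_add hD0 hT0,
    ENNReal.ofReal_tsum_of_nonneg (fun _ => abs_nonneg _) hab,
    ENNReal.ofReal_tsum_of_nonneg (fun _ => hb0 _) tail_summable]
  gcongr
  calc ∑ n ∈ Finset.range M, (ENNReal.ofReal (b n) - ENNReal.ofReal (a n))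
      ≤ ∑ n ∈ Finset.range M, ENNReal.ofReal |a n - b n| := by
        refine Finset.sum_le_sum fun n _ => ?_
        rw [← ENNReal.ofReal_sub _ (ha0 n), abs_sub_comm]
        exact ENNReal.ofReal_le_ofReal (le_abs_self _)
    _ ≤ ∑' n, ENNReal.ofReal |a n - b n| := ENNReal.sum_le_tsum _

end RealWeights

/-- For countable convex combinations `∑ aₙ μₙ` and `∑ bₙ νₙ` (nonnegative weights summing
to 1), and any `M ∈ ℕ` (here positive, since the paper's `ℕ` starts at `1`):
`d_P(∑ aₙ μₙ, ∑ bₙ νₙ) ≤ max_{n<M} d_P(μₙ, νₙ) + ∑ |aₙ − bₙ| + ∑_{n≥M} aₙ + ∑_{n≥M} bₙ`. -/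
theorem prokhorovDist_countable_convexCombo_le {X : Type*} [MetricSpace X]
    [MeasurableSpace X] [BorelSpace X]
    (a b : ℕ → ℝ) (ha0 : ∀ n, 0 ≤ a n) (hb0 : ∀ n, 0 ≤ b n)
    (hasum : ∑' n, a n = 1) (hbsum : ∑' n, b n = 1)
    (μ ν : ℕ → Measure X)
    (hμ : ∀ n, IsProbabilityMeasure (μ n)) (hν : ∀ n, IsProbabilityMeasure (ν n))
    (M : ℕ) (hM : 0 < M) :
    prokhorovDist (Measure.sum fun n => ENNReal.ofReal (a n) • μ n)
        (Measure.sum fun n => ENNReal.ofReal (b n) • ν n) ≤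
      (Finset.range M).sup' (Finset.nonempty_range_iff.mpr hM.ne')
          (fun n => prokhorovDist (μ n) (ν n))
        + (∑' n, |a n - b n|) + (∑' n, a (M + n)) + (∑' n, b (M + n)) := by
  have ha : Summable a := summable_of_tsum_ne_zero (hasum ▸ one_ne_zero)
  have hb : Summable b := summable_of_tsum_ne_zero (hbsum ▸ one_ne_zero)
  have ha_one : ∑' n, ENNReal.ofReal (a n) = 1 := by
    rw [← ENNReal.ofReal_tsum_of_nonneg ha0 ha, hasum, ENNReal.ofReal_one]
  have hd (n : ℕ) (hn : n < M) := Finset.le_sup' (fun k => prokhorovDist (μ k) (ν k))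
    (Finset.mem_range.mpr hn)
  have hdist := prokhorovDist_countable_convexCombo_le_general ha_one.le hb.tsum_ofReal_ne_top μ
    (fun n => prob_le_one) (Set.Iio M) ((prokhorovDist_nonneg _ _).trans (hd 0 hM)) hd
  linarith [toReal_tsum_ofReal_tsub_indicator_Iio_le ha0 hb0 hb (ha.sub hb).abs M,
    tsum_nonneg (L := .unconditional ℕ) fun n => ha0 (M + n)]
end

section
/- Let X be a complete separable metric space and μ a Borel probability measure on X whose support is all of X and which contains at least two points. Fix a real number p with 1 ≤ p < ∞. For each n ∈ ℕ, equip X^n with the ℓ^p product metric d_p((x_i), (y_i)) := (∑_{i=1}^n dist(x_i, y_i)^p)^{1/p} and with the n-fold product measure μ^{⊗n}. Then for every r > 0, lim_{n→∞} sup_{x ∈ X^n} μ^{⊗n}(U_r(x)) = 0, where U_r(x) is the open ball of radius r about x in the ℓ^p product metric. -/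
open MeasureTheory

/-!
By Chernoff's inequality the `ℓᵖ` ball of radius `r` about `x` in a finite product has measure at
most `exp (r ^ p) * ∏ i, ∫ exp (-dist (x i) y ^ p) ∂μ`, so it suffices that these integrals are
bounded by some `c < 1` uniformly in the center. Fix two support points `a`, `b` and put
`δ = dist a b / 4`. Every center is at distance at least `2 * δ` from `a` or from `b`, hence at
distance at least `δ` from every point of the `δ`-ball about that point; both balls have positive
measure.
-/

open ProbabilityTheory

section MomentGeneratingFunction

lemma mgf_le_one_sub_measureReal_mul {Ω : Type*} [MeasurableSpace Ω] {μ : Measure Ω}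
    [IsProbabilityMeasure μ] {Y : Ω → ℝ} {B : Set Ω} {t δ : ℝ} (ht : t ≤ 0) (hB : MeasurableSet B)
    (hY : 0 ≤ᵐ[μ] Y) (hYB : ∀ᵐ ω ∂μ, ω ∈ B → δ ≤ Y ω) :
    mgf Y μ t ≤ 1 - μ.real B * (1 - Real.exp (t * δ)) := by
  have hint : Integrable (B.indicator fun _ => 1 - Real.exp (t * δ)) μ :=
    (integrable_const _).indicator hB
  have hle : ∀ᵐ ω ∂μ, Real.exp (t * Y ω) ≤ 1 - B.indicator (fun _ => 1 - Real.exp (t * δ)) ω := by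
    filter_upwards [hY, hYB] with ω hω hωB
    by_cases hmem : ω ∈ B
    · simpa [hmem] using mul_le_mul_of_nonpos_left (hωB hmem) ht
    · simpa [hmem] using mul_nonpos_of_nonpos_of_nonneg ht hω
  calc mgf Y μ t
      ≤ ∫ ω, (1 - B.indicator (fun _ => 1 - Real.exp (t * δ)) ω) ∂μ :=
        integral_mono_of_nonneg (ae_of_all _ fun _ => Real.exp_nonneg _)
          ((integrable_const _).sub hint) hle
    _ = 1 - μ.real B * (1 - Real.exp (t * δ)) := by
        rw [integral_sub (integrable_const _) hint, integral_indicator_const _ hB]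
        simp

lemma integrable_exp_mul_of_nonpos_of_nonneg {Ω : Type*} [MeasurableSpace Ω] {μ : Measure Ω}
    [IsFiniteMeasure μ] {Y : Ω → ℝ} {t : ℝ} (ht : t ≤ 0) (hYm : AEMeasurable Y μ)
    (hY : 0 ≤ᵐ[μ] Y) : Integrable (fun ω => Real.exp (t * Y ω)) μ := by
  have hneg : ∀ᵐ ω ∂μ, (-Y) ω ≤ 0 := hY.mono fun ω hω => neg_nonpos.2 hω
  simpa using integrable_exp_mul_of_le (-t) 0 (neg_nonneg.2 ht) hYm.neg hneg

variable {ι : Type*} [Fintype ι] {Ω : ι → Type*} [∀ i, MeasurableSpace (Ω i)]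
  {μ : ∀ i, Measure (Ω i)} {Y : ∀ i, Ω i → ℝ} {t : ℝ}

lemma mgf_pi_sum [∀ i, SigmaFinite (μ i)] :
    mgf (fun ω => ∑ i, Y i (ω i)) (Measure.pi μ) t = ∏ i, mgf (Y i) (μ i) t := by
  simp only [mgf, Finset.mul_sum, Real.exp_sum]
  exact integral_fintype_prod_eq_prod fun i ω => Real.exp (t * Y i ω)

lemma measureReal_pi_sum_le_le_exp_mul_prod_mgf [∀ i, IsFiniteMeasure (μ i)] (R : ℝ) (ht : t ≤ 0)
    (hint : ∀ i, Integrable (fun ω => Real.exp (t * Y i ω)) (μ i)) :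
    (Measure.pi μ).real {ω | ∑ i, Y i (ω i) ≤ R} ≤
      Real.exp (-t * R) * ∏ i, mgf (Y i) (μ i) t := by
  rw [← mgf_pi_sum]
  refine measure_le_le_exp_mul_mgf R ht ?_
  simp only [Finset.mul_sum, Real.exp_sum]
  exact Integrable.fintype_prod_dep hint

end MomentGeneratingFunction

section LpBall

lemma measureReal_pi_lp_ball_le_exp_mul_prod_mgf {ι : Type*} [Fintype ι] {X : ι → Type*}
    [∀ i, PseudoMetricSpace (X i)] [∀ i, MeasurableSpace (X i)] [∀ i, OpensMeasurableSpace (X i)]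
    (μ : ∀ i, Measure (X i)) [∀ i, IsFiniteMeasure (μ i)] {p : ℝ} (hp : 0 < p) (r : ℝ)
    (x : ∀ i, X i) :
    (Measure.pi μ).real {y | (∑ i, dist (x i) (y i) ^ p) ^ (1 / p) < r} ≤
      Real.exp (r ^ p) * ∏ i, mgf (fun y => dist (x i) y ^ p) (μ i) (-1) := by
  have hsub : {y : ∀ i, X i | (∑ i, dist (x i) (y i) ^ p) ^ (1 / p) < r} ⊆
      {y | ∑ i, dist (x i) (y i) ^ p ≤ r ^ p} := by
    intro y (hy : (∑ i, dist (x i) (y i) ^ p) ^ (1 / p) < r)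
    have hsum : 0 ≤ ∑ i, dist (x i) (y i) ^ p := by positivity
    have hr : 0 ≤ r := (Real.rpow_nonneg hsum _).trans hy.le
    rw [one_div] at hy
    exact ((Real.rpow_inv_lt_iff_of_pos hsum hr hp).1 hy).le
  have hint : ∀ i, Integrable (fun y => Real.exp (-1 * dist (x i) y ^ p)) (μ i) := fun i =>
    integrable_exp_mul_of_nonpos_of_nonneg (by norm_num)
      ((continuous_const.dist continuous_id).measurable.pow_const p).aemeasurable
      (ae_of_all _ fun y => by positivity)
  calc (Measure.pi μ).real {y | (∑ i, dist (x i) (y i) ^ p) ^ (1 / p) < r}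
      ≤ (Measure.pi μ).real {y | ∑ i, dist (x i) (y i) ^ p ≤ r ^ p} := measureReal_mono hsub
    _ ≤ Real.exp (r ^ p) * ∏ i, mgf (fun y => dist (x i) y ^ p) (μ i) (-1) := by
        simpa using measureReal_pi_sum_le_le_exp_mul_prod_mgf (r ^ p) (by norm_num) hint

variable {X : Type*} [PseudoMetricSpace X] [MeasurableSpace X] [OpensMeasurableSpace X]
  {μ : Measure X} [IsProbabilityMeasure μ] {p : ℝ}

lemma mgf_dist_rpow_le_of_two_mul_le_dist (hp : 0 ≤ p) {t δ : ℝ} (ht : t ≤ 0) (hδ : 0 ≤ δ)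
    {x z : X} (hxz : 2 * δ ≤ dist x z) :
    mgf (fun y => dist x y ^ p) μ t ≤
      1 - μ.real (Metric.ball z δ) * (1 - Real.exp (t * δ ^ p)) := by
  refine mgf_le_one_sub_measureReal_mul ht measurableSet_ball
    (ae_of_all _ fun y => by positivity) (ae_of_all _ fun y hy => ?_)
  have hyz : dist y z < δ := hy
  exact Real.rpow_le_rpow hδ (by linarith [dist_triangle x y z]) hp

lemma exists_lt_one_forall_mgf_dist_rpow_le (hp : 0 < p) {t : ℝ} (ht : t < 0) {a b : X}
    (ha : a ∈ μ.support) (hb : b ∈ μ.support) (hab : 0 < dist a b) :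
    ∃ c < 1, ∀ x, mgf (fun y => dist x y ^ p) μ t ≤ c := by
  set δ := dist a b / 4 with hδ_def
  have hδ : 0 < δ := by positivity
  let bound : X → ℝ := fun z => 1 - μ.real (Metric.ball z δ) * (1 - Real.exp (t * δ ^ p))
  have hbound : ∀ z ∈ μ.support, bound z < 1 := by
    intro z hz
    have hball : 0 < μ.real (Metric.ball z δ) :=
      ENNReal.toReal_pos_iff.2
        ⟨Metric.nhds_basis_ball.mem_measureSupport.1 hz δ hδ, measure_lt_top _ _⟩
    have hexp : Real.exp (t * δ ^ p) < 1 :=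
      Real.exp_lt_one_iff.2 (mul_neg_of_neg_of_pos ht (by positivity))
    exact sub_lt_self _ (mul_pos hball (sub_pos.2 hexp))
  refine ⟨max (bound a) (bound b), max_lt (hbound a ha) (hbound b hb), fun x => ?_⟩
  have hfar : 2 * δ ≤ dist x a ∨ 2 * δ ≤ dist x b := by
    by_contra! hnear
    linarith [dist_triangle_left a b x, hnear.1, hnear.2]
  exact le_max_iff.2 (hfar.imp (mgf_dist_rpow_le_of_two_mul_le_dist hp.le ht.le hδ.le)
    (mgf_dist_rpow_le_of_two_mul_le_dist hp.le ht.le hδ.le))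

theorem tendsto_sup_measure_lp_ball_zero_general (hp : 0 < p) {a b : X} (ha : a ∈ μ.support)
    (hb : b ∈ μ.support) (hab : 0 < dist a b) (r : ℝ) :
    Filter.Tendsto
      (fun n : ℕ =>
        ⨆ x : Fin n → X,
          ((Measure.pi fun _ : Fin n => μ)
            {y : Fin n → X | (∑ i, dist (x i) (y i) ^ p) ^ (1 / p) < r}).toReal)
      Filter.atTop (nhds 0) := by
  obtain ⟨c, hc_lt, hc⟩ := exists_lt_one_forall_mgf_dist_rpow_le hp neg_one_lt_zero ha hb hab
  have hc_nonneg : 0 ≤ c := mgf_nonneg.trans (hc a)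
  have hball (n : ℕ) (x : Fin n → X) : (Measure.pi fun _ : Fin n => μ).real
      {y | (∑ i, dist (x i) (y i) ^ p) ^ (1 / p) < r} ≤ Real.exp (r ^ p) * c ^ n := by
    have hprod : ∏ i, mgf (fun y => dist (x i) y ^ p) μ (-1) ≤ c ^ n := by
      simpa using Finset.prod_le_prod (s := Finset.univ) (fun _ _ => mgf_nonneg)
        fun i _ => hc (x i)
    exact (measureReal_pi_lp_ball_le_exp_mul_prod_mgf _ hp r x).trans (by gcongr)
  refine squeeze_zero (fun n => Real.iSup_nonneg fun x => ENNReal.toReal_nonneg)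
    (fun n => Real.iSup_le (hball n) (by positivity)) ?_
  simpa using (tendsto_pow_atTop_nhds_zero_of_lt_one hc_nonneg hc_lt).const_mul (Real.exp (r ^ p))

end LpBall

/-- For a nontrivial mm-space `(X, d, μ)` (complete separable metric space, `supp μ = X`,
at least two points) and `1 ≤ p < ∞`, the supremum over all centers `x ∈ Xⁿ` of the
`μ^{⊗n}`-measure of the open `r`-ball about `x` in the `ℓᵖ` product metric tends to `0`
as `n → ∞`, for every `r > 0`. -/
theorem tendsto_sup_measure_lp_ball_zero {X : Type*} [MetricSpace X] [CompleteSpace X]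
    [TopologicalSpace.SeparableSpace X] [MeasurableSpace X] [BorelSpace X] [Nontrivial X]
    (μ : Measure X) [IsProbabilityMeasure μ]
    (hsupp : ∀ x : X, ∀ ε > 0, 0 < μ (Metric.ball x ε))
    (p : ℝ) (hp : 1 ≤ p) (r : ℝ) (hr : 0 < r) :
    Filter.Tendsto
      (fun n : ℕ =>
        ⨆ x : Fin n → X,
          ((Measure.pi fun _ : Fin n => μ)
            {y : Fin n → X | (∑ i, dist (x i) (y i) ^ p) ^ (1 / p) < r}).toReal)
      Filter.atTop (nhds 0) := by
  obtain ⟨a, b, hab⟩ := exists_pair_ne X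
  have hmem (x : X) : x ∈ μ.support := Metric.nhds_basis_ball.mem_measureSupport.2 (hsupp x)
  exact tendsto_sup_measure_lp_ball_zero_general (by linarith) (hmem a) (hmem b) (dist_pos.2 hab) r
end

section
/- Let X be a complete separable metric space and μ a Borel probability measure on X whose support is all of X and which contains at least two points. For each n ∈ ℕ, equip X^n with the supremum metric d_∞((x_i), (y_i)) := max_{1≤i≤n} dist(x_i, y_i) and with the n-fold product measure μ^{⊗n}. Then for every r with 0 < r < diam(X)/2, lim_{n→∞} sup_{x ∈ X^n} μ^{⊗n}(U_r(x)) = 0, where U_r(x) is the open ball of radius r about x in the supremum metric. -/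
open MeasureTheory

/-!
If `2 * r < dist a b`, every ball of radius `r` misses a small ball about `a` or about `b`. When `a`
and `b` lie in the support of `μ`, both of these have positive measure, so the `r`-balls of `X` have
measure at most some `q < 1`. A supremum-metric ball lies in the product of its coordinate balls,
hence has measure at most `q ^ n` in `Xⁿ`.
-/

open Metric

section Distances

variable {X : Type*} [PseudoMetricSpace X]

lemma exists_lt_dist_of_ofReal_lt_ediam {s : Set X} {d : ℝ} (h : ENNReal.ofReal d < ediam s) :
    ∃ a ∈ s, ∃ b ∈ s, d < dist a b := by
  contrapose! h
  refine ediam_le fun a ha b hb => ?_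
  rw [edist_dist]
  exact ENNReal.ofReal_le_ofReal (h a ha b hb)

lemma le_dist_or_le_dist_of_two_mul_le_dist {d : ℝ} {a b : X} (h : 2 * d ≤ dist a b) (x : X) :
    d ≤ dist x a ∨ d ≤ dist x b := by
  by_contra! hx
  linarith [dist_triangle_left a b x]

lemma ball_subset_pi_ball {ι : Type*} [Fintype ι] {Y : ι → Type*} [∀ i, PseudoMetricSpace (Y i)]
    (x : ∀ i, Y i) (r : ℝ) : ball x r ⊆ Set.univ.pi fun i => ball (x i) r :=
  fun y hy i _ => (dist_le_pi_dist y x i).trans_lt hy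

end Distances

section Balls

variable {X : Type*} [PseudoMetricSpace X] [MeasurableSpace X]

lemma mem_support_iff_forall_measure_ball_pos {μ : Measure X} {x : X} :
    x ∈ μ.support ↔ ∀ ε > 0, 0 < μ (ball x ε) :=
  nhds_basis_ball.mem_measureSupport

lemma measure_ball_le_measure_univ_sub_measure_ball [OpensMeasurableSpace X] (μ : Measure X)
    [IsFiniteMeasure μ] {x y : X} {r ε : ℝ} (h : r + ε ≤ dist x y) :
    μ (ball x r) ≤ μ Set.univ - μ (ball y ε) := by
  rw [← measure_compl measurableSet_ball (measure_ne_top μ _)]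
  exact measure_mono (ball_disjoint_ball h).subset_compl_right

lemma iSup_measure_ball_lt_measure_univ [OpensMeasurableSpace X] (μ : Measure X)
    [IsFiniteMeasure μ] {r : ℝ} (h : ENNReal.ofReal (2 * r) < ediam μ.support) :
    ⨆ x, μ (ball x r) < μ Set.univ := by
  obtain ⟨a, ha, b, hb, hab⟩ := exists_lt_dist_of_ofReal_lt_ediam h
  obtain ⟨ε, hε, hεab⟩ : ∃ ε > 0, 2 * (r + ε) ≤ dist a b :=
    ⟨dist a b / 2 - r, by linarith, by linarith⟩
  have ha_pos : 0 < μ (ball a ε) := mem_support_iff_forall_measure_ball_pos.1 ha ε hε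
  have hb_pos : 0 < μ (ball b ε) := mem_support_iff_forall_measure_ball_pos.1 hb ε hε
  have huniv_pos : 0 < μ Set.univ := ha_pos.trans_le (measure_mono (Set.subset_univ _))
  calc ⨆ x, μ (ball x r)
      ≤ μ Set.univ - min (μ (ball a ε)) (μ (ball b ε)) := iSup_le fun x => by
        rcases le_dist_or_le_dist_of_two_mul_le_dist hεab x with hx | hx
        · exact (measure_ball_le_measure_univ_sub_measure_ball μ hx).trans
            (tsub_le_tsub_left (min_le_left _ _) _)
        · exact (measure_ball_le_measure_univ_sub_measure_ball μ hx).trans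
            (tsub_le_tsub_left (min_le_right _ _) _)
    _ < μ Set.univ :=
        ENNReal.sub_lt_self (measure_ne_top μ _) huniv_pos.ne' (lt_min ha_pos hb_pos).ne'

end Balls

section Product

lemma measure_pi_ball_le_prod {ι : Type*} [Fintype ι] {X : ι → Type*}
    [∀ i, PseudoMetricSpace (X i)] [∀ i, MeasurableSpace (X i)] (μ : ∀ i, Measure (X i))
    [∀ i, SigmaFinite (μ i)] (x : ∀ i, X i) (r : ℝ) :
    Measure.pi μ (ball x r) ≤ ∏ i, μ i (ball (x i) r) :=
  (measure_mono (ball_subset_pi_ball x r)).trans_eq (Measure.pi_pi μ _)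

variable {X : Type*} [PseudoMetricSpace X] [MeasurableSpace X]

lemma iSup_measure_pi_ball_le_pow (ι : Type*) [Fintype ι] (μ : Measure X) [SigmaFinite μ] (r : ℝ) :
    ⨆ x : ι → X, Measure.pi (fun _ => μ) (ball x r) ≤ (⨆ y, μ (ball y r)) ^ Fintype.card ι :=
  iSup_le fun x => (measure_pi_ball_le_prod (fun _ => μ) x r).trans <|
    Finset.prod_le_pow_card _ _ _ fun i _ => le_iSup (fun y => μ (ball y r)) (x i)

lemma tendsto_iSup_measure_pi_ball_zero {μ : Measure X} [SigmaFinite μ] {r : ℝ}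
    (h : ⨆ y, μ (ball y r) < 1) :
    Filter.Tendsto (fun n : ℕ => ⨆ x : Fin n → X, Measure.pi (fun _ => μ) (ball x r))
      Filter.atTop (nhds 0) :=
  tendsto_of_tendsto_of_tendsto_of_le_of_le tendsto_const_nhds
    (ENNReal.tendsto_pow_atTop_nhds_zero_of_lt_one h) (fun _ => zero_le)
    fun n => by simpa using iSup_measure_pi_ball_le_pow (Fin n) μ r

end Product

theorem tendsto_sup_measure_supBall_zero_general {X : Type*} [PseudoMetricSpace X]
    [MeasurableSpace X] [OpensMeasurableSpace X] (μ : Measure X) [IsProbabilityMeasure μ] (r : ℝ)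
    (hrdiam : ENNReal.ofReal (2 * r) < ediam μ.support) :
    Filter.Tendsto
      (fun n : ℕ => ⨆ x : Fin n → X, ((Measure.pi fun _ : Fin n => μ) (ball x r)).toReal)
      Filter.atTop (nhds 0) := by
  have hball : ⨆ y, μ (ball y r) < 1 := by
    simpa only [measure_univ] using iSup_measure_ball_lt_measure_univ μ hrdiam
  have htoReal := (ENNReal.tendsto_toReal ENNReal.zero_ne_top).comp
    (tendsto_iSup_measure_pi_ball_zero hball)
  simpa only [Function.comp_def, ENNReal.toReal_zero,
    ENNReal.toReal_iSup fun _ => measure_ne_top _ _] using htoReal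

/-- For a nontrivial mm-space `(X, d, μ)` (complete separable metric space, `supp μ = X`,
at least two points) and any `r` with `0 < r < diam(X)/2` (using the extended diameter),
the supremum over all centers `x ∈ Xⁿ` of the `μ^{⊗n}`-measure of the open `r`-ball about
`x` in the supremum (`ℓ^∞`) product metric (which is the standard product metric on
`Fin n → X`) tends to `0` as `n → ∞`. -/
theorem tendsto_sup_measure_supBall_zero {X : Type*} [MetricSpace X] [CompleteSpace X]
    [TopologicalSpace.SeparableSpace X] [MeasurableSpace X] [BorelSpace X] [Nontrivial X]
    (μ : Measure X) [IsProbabilityMeasure μ]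
    (hsupp : ∀ x : X, ∀ ε > 0, 0 < μ (Metric.ball x ε))
    (r : ℝ) (hr : 0 < r)
    (hrdiam : ENNReal.ofReal (2 * r) < EMetric.diam (Set.univ : Set X)) :
    Filter.Tendsto
      (fun n : ℕ =>
        ⨆ x : Fin n → X,
          ((Measure.pi fun _ : Fin n => μ) (Metric.ball x r)).toReal)
      Filter.atTop (nhds 0) := by
  have hsupport : μ.support = Set.univ :=
    Set.eq_univ_of_forall fun x => mem_support_iff_forall_measure_ball_pos.2 (hsupp x)
  exact tendsto_sup_measure_supBall_zero_general μ r (hsupport ▸ hrdiam)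
end

section
/- Let S be a metric space, let τ and ν be Borel probability measures on S, and let A ⊆ S be a Borel set with τ(A) = 1 and such that ν(B) ≤ τ(B) for every Borel set B ⊆ A. Fix a point x₀ ∈ A and define the probability measure ν̃ := ν|_A + ν(S∖A)·δ_{x₀}, where ν|_A is the restriction of ν to A. Then for every Borel set B ⊆ S we have |τ(B) − ν̃(B)| ≤ 1 − ν(A); in particular the total variation distance between τ and ν̃ is at most 1 − ν(A). -/
open MeasureTheory

/-- The total variation distance between two Borel probability measures:
`d_TV(μ, ν) := sup {|μ(A) − ν(A)| : A Borel}`. -/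
noncomputable def tvDist {X : Type*} [MeasurableSpace X] (μ ν : Measure X) : ℝ :=
  ⨆ A : {A : Set X // MeasurableSet A}, |(μ A.1).toReal - (ν A.1).toReal|

/-!
Both `τ` and `ν̃` dominate the measure `ν|_A`, and `ν̃` has the same total mass as `ν`. So the parts
of `τ` and `ν̃` that exceed `ν|_A` both have mass `1 - ν(A)`, and these parts alone account for the
difference `τ(B) - ν̃(B)`.
-/

section

variable {X : Type*} [MeasurableSpace X]

theorem measureReal_sub_measureReal_le_of_le_of_le {ρ μ ν : Measure X}
    [IsFiniteMeasure μ] [IsFiniteMeasure ν] (hμ : ρ ≤ μ) (hν : ρ ≤ ν) (s : Set X) :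
    μ.real s - ν.real s ≤ μ.real Set.univ - ρ.real Set.univ := by
  have : IsFiniteMeasure ρ := isFiniteMeasure_of_le μ hμ
  have hsplit (t : Set X) : μ.real t = (μ - ρ).real t + ρ.real t := by
    rw [← measureReal_add_apply, Measure.sub_add_cancel_of_le hμ]
  calc μ.real s - ν.real s
      ≤ μ.real s - ρ.real s :=
        sub_le_sub_left (ENNReal.toReal_mono (measure_ne_top ν s) (hν s)) _
    _ = (μ - ρ).real s := by rw [hsplit, add_sub_cancel_right]
    _ ≤ (μ - ρ).real Set.univ := measureReal_mono (Set.subset_univ s)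
    _ = μ.real Set.univ - ρ.real Set.univ := by rw [hsplit, add_sub_cancel_right]

theorem abs_measureReal_sub_measureReal_le_of_le_of_le {ρ μ ν : Measure X}
    [IsFiniteMeasure μ] [IsFiniteMeasure ν] (hμ : ρ ≤ μ) (hν : ρ ≤ ν) (s : Set X) :
    |μ.real s - ν.real s| ≤ max (μ.real Set.univ) (ν.real Set.univ) - ρ.real Set.univ := by
  rw [← max_sub_sub_right]
  exact max_le_max (measureReal_sub_measureReal_le_of_le_of_le hμ hν s)
    (by simpa using measureReal_sub_measureReal_le_of_le_of_le hν hμ s)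

theorem tvDist_le_of_forall_abs_sub_le {μ ν : Measure X} {c : ℝ}
    (h : ∀ s, MeasurableSet s → |μ.real s - ν.real s| ≤ c) : tvDist μ ν ≤ c :=
  have : Nonempty {s : Set X // MeasurableSet s} := ⟨⟨∅, .empty⟩⟩
  ciSup_le fun s => h s.1 s.2

theorem restrict_le_of_forall_subset {μ ν : Measure X} {A : Set X} (hA : MeasurableSet A)
    (h : ∀ B ⊆ A, MeasurableSet B → μ B ≤ ν B) : μ.restrict A ≤ ν := by
  refine Measure.le_iff.2 fun B hB => ?_
  rw [Measure.restrict_apply hB]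
  exact (h _ Set.inter_subset_right (hB.inter hA)).trans (measure_mono Set.inter_subset_left)

theorem restrict_add_measure_compl_smul_apply_univ (ν η : Measure X) [IsProbabilityMeasure η]
    {A : Set X} (hA : MeasurableSet A) :
    (ν.restrict A + ν Aᶜ • η) Set.univ = ν Set.univ := by
  simp [measure_add_measure_compl hA]

theorem tv_pushIn_le_general (τ ν η : Measure X) [IsFiniteMeasure τ] [IsFiniteMeasure ν]
    [IsProbabilityMeasure η] {A : Set X} (hA : MeasurableSet A)
    (hle : ∀ B ⊆ A, MeasurableSet B → ν B ≤ τ B) :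
    (∀ B, |τ.real B - (ν.restrict A + ν Aᶜ • η).real B| ≤
        max (τ.real Set.univ) (ν.real Set.univ) - ν.real A) ∧
      tvDist τ (ν.restrict A + ν Aᶜ • η) ≤
        max (τ.real Set.univ) (ν.real Set.univ) - ν.real A := by
  have hmass := restrict_add_measure_compl_smul_apply_univ ν η hA
  have : IsFiniteMeasure (ν.restrict A + ν Aᶜ • η) := ⟨hmass ▸ measure_lt_top ν Set.univ⟩
  have hbound (B : Set X) : |τ.real B - (ν.restrict A + ν Aᶜ • η).real B| ≤
      max (τ.real Set.univ) (ν.real Set.univ) - ν.real A := by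
    have h := abs_measureReal_sub_measureReal_le_of_le_of_le (restrict_le_of_forall_subset hA hle)
      (Measure.le_add_right le_rfl : ν.restrict A ≤ ν.restrict A + ν Aᶜ • η) B
    rwa [measureReal_restrict_apply_univ, measureReal_def (ν.restrict A + _) Set.univ, hmass] at h
  exact ⟨hbound, tvDist_le_of_forall_abs_sub_le fun B _ => hbound B⟩

end

/-- Let `τ`, `ν` be Borel probability measures on a metric space `S`, `A` Borel with
`τ(A) = 1` and `ν(B) ≤ τ(B)` for all Borel `B ⊆ A`, and `x₀ ∈ A`. Then the probability
measure `ν̃ := ν|_A + ν(S∖A)·δ_{x₀}` satisfies `|τ(B) − ν̃(B)| ≤ 1 − ν(A)` for every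
Borel set `B`; in particular `d_TV(τ, ν̃) ≤ 1 − ν(A)`. -/
theorem tv_pushIn_le {S : Type*} [MetricSpace S] [MeasurableSpace S] [BorelSpace S]
    (τ ν : Measure S) [IsProbabilityMeasure τ] [IsProbabilityMeasure ν]
    (A : Set S) (hA : MeasurableSet A) (hτA : τ A = 1)
    (hle : ∀ B : Set S, B ⊆ A → MeasurableSet B → ν B ≤ τ B)
    (x₀ : S) (hx₀ : x₀ ∈ A) :
    (∀ B : Set S, MeasurableSet B →
        |(τ B).toReal - ((ν.restrict A + ν Aᶜ • Measure.dirac x₀) B).toReal| ≤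
          1 - (ν A).toReal) ∧
      tvDist τ (ν.restrict A + ν Aᶜ • Measure.dirac x₀) ≤ 1 - (ν A).toReal := by
  have h := tv_pushIn_le_general τ ν (Measure.dirac x₀) hA hle
  simp only [probReal_univ, max_self] at h
  exact ⟨fun B _ => h.1 B, h.2⟩
end
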